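/- Fix t > 0 with t ≠ 2 and x ∈ ℝ, and let g_n = (c_n x + d_n)^{1/t} for n large enough that c_n x + d_n > 0. Then as n → ∞, Φ(g_n)^{n−1} = Λ(x) ( 1 + ϑ₁ e^{−x} b_n^{−2} + e^{−x} b_n^{−4} ( (ϑ₁²/2) e^{−x} − ϑ₂ ) + O(b_n^{−6}) ), where ϑ₁ = 1 + x + ((2−t)/2) x² and ϑ₂ = 3 + 3x + (3/2) x² + ((2−t)(2t+1)/6) x³ + ((t−2)²/8) x⁴. -/

import Mathlib

open Real Filter Topology

/-- The standard normal distribution function. -/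
noncomputable def stdNormalCDF (x : ℝ) : ℝ :=
  ∫ u in Set.Iic x, Real.exp (-u ^ 2 / 2) / Real.sqrt (2 * Real.pi)

/-- The Gumbel distribution function `Λ(x) = exp(−e^{−x})`. -/
noncomputable def gumbel (x : ℝ) : ℝ := Real.exp (-Real.exp (-x))

open Asymptotics in
lemma aux_binom (p : ℝ) :
    (fun y : ℝ => (1 + y) ^ p - (1 + p * y + p * (p - 1) / 2 * y ^ 2
      + p * (p - 1) * (p - 2) / 6 * y ^ 3)) =O[𝓝 0] fun y => y ^ 4 := by
  have h := (Real.one_add_rpow_hasFPowerSeriesAt_zero (a := p)).isBigO_sub_partialSum_pow 4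
  have hq : Polynomial.smeval (2 : Polynomial ℤ) p = 2 := by
    simpa using Polynomial.smeval_natCast ℤ p 2
  have h2 : Ring.choose p 2 = p * (p - 1) / 2 := by
    rw [Ring.choose_eq_smul]
    simp [descPochhammer_succ_right, Nat.factorial, Polynomial.smeval_mul, Polynomial.smeval_sub, hq]
    ring
  have h3 : Ring.choose p 3 = p * (p - 1) * (p - 2) / 6 := by
    rw [Ring.choose_eq_smul]
    simp [descPochhammer_succ_right, Nat.factorial, Polynomial.smeval_mul, Polynomial.smeval_sub, hq]
    ring
  simp only [FormalMultilinearSeries.partialSum, Finset.sum_range_succ, binomialSeries_apply, h2, h3] at h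
  simp [h2, h3] at h
  refine (h.congr_left ?_).trans ?_
  · intro y; ring
  · exact IsBigO.of_bound 1 (by simp)

def Ex (s f : ℕ → ℝ) (a0 a1 a2 : ℝ) : Prop :=
  (fun n => f n - (a0 + a1 * s n + a2 * s n ^ 2)) =O[atTop] fun n => s n ^ 3

section
open Asymptotics
variable {s f h : ℕ → ℝ} {a0 a1 a2 b0 b1 b2 : ℝ}

lemma Ex.pow_bdd (hs : Tendsto s atTop (𝓝 0)) (j : ℕ) :
    (fun n => s n ^ (3 + j)) =O[atTop] fun n => s n ^ 3 := by
  have h1 : (fun n => s n ^ j) =O[atTop] fun _ => (1 : ℝ) :=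
    (hs.pow j).isBigO_one ℝ
  simpa [pow_add] using (isBigO_refl (fun n => s n ^ 3) atTop).mul h1

lemma Ex.bdd (hs : Tendsto s atTop (𝓝 0)) (hf : Ex s f a0 a1 a2) : f =O[atTop] fun _ => (1 : ℝ) := by
  have h1 : (fun n => a0 + a1 * s n + a2 * s n ^ 2) =O[atTop] fun _ => (1 : ℝ) :=
    ((tendsto_const_nhds.add (hs.const_mul a1)).add ((hs.pow 2).const_mul a2)).isBigO_one ℝ
  have h2 : (fun n => s n ^ 3) =O[atTop] fun _ => (1 : ℝ) := (hs.pow 3).isBigO_one ℝ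
  refine ((hf.trans h2).add h1).congr_left ?_
  intro n; ring

lemma Ex.tendsto (hs : Tendsto s atTop (𝓝 0)) (hf : Ex s f a0 a1 a2) : Tendsto f atTop (𝓝 a0) := by
  have h1 : Tendsto (fun n => a0 + a1 * s n + a2 * s n ^ 2) atTop (𝓝 (a0 + a1 * 0 + a2 * 0 ^ 2)) :=
    ((tendsto_const_nhds.add (hs.const_mul a1)).add ((hs.pow 2).const_mul a2))
  have h2 : Tendsto (fun n => s n ^ 3) atTop (𝓝 (0 ^ 3)) := hs.pow 3
  have h3 := hf.trans_tendsto (by simpa using h2)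
  have := h3.add h1
  simpa using this

lemma Ex.congr (hf : Ex s f a0 a1 a2) (e0 : a0 = b0) (e1 : a1 = b1) (e2 : a2 = b2) :
    Ex s f b0 b1 b2 := by subst e0 e1 e2; exact hf

lemma Ex.congr_fun (hf : Ex s f a0 a1 a2) (e : f =ᶠ[atTop] h) :
    Ex s h a0 a1 a2 := by
  refine IsBigO.congr' hf ?_ EventuallyEq.rfl
  filter_upwards [e] with n hn
  rw [hn]

lemma Ex.add_bigO (hf : Ex s f a0 a1 a2) (e : (fun n => h n - f n) =O[atTop] fun n => s n ^ 3) :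
    Ex s h a0 a1 a2 := by
  refine (IsBigO.add hf e).congr_left ?_
  intro n; ring

lemma Ex.const (c : ℝ) : Ex s (fun _ => c) c 0 0 := by
  refine (isBigO_zero _ _).congr_left ?_
  intro n; simp

lemma Ex.self : Ex s s 0 1 0 := by
  refine (isBigO_zero _ _).congr_left ?_
  intro n; simp

lemma Ex.add (hf : Ex s f a0 a1 a2) (hh : Ex s h b0 b1 b2) :
    Ex s (fun n => f n + h n) (a0 + b0) (a1 + b1) (a2 + b2) := by
  refine (IsBigO.add hf hh).congr_left ?_
  intro n; ring

lemma Ex.mul (hs : Tendsto s atTop (𝓝 0)) (hf : Ex s f a0 a1 a2) (hh : Ex s h b0 b1 b2) :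
    Ex s (fun n => f n * h n) (a0 * b0) (a0 * b1 + a1 * b0) (a0 * b2 + a1 * b1 + a2 * b0) := by
  have h1 := IsBigO.mul hf (hh.bdd hs)
  have hP : (fun n => a0 + a1 * s n + a2 * s n ^ 2) =O[atTop] fun _ => (1 : ℝ) :=
    ((tendsto_const_nhds.add (hs.const_mul a1)).add ((hs.pow 2).const_mul a2)).isBigO_one ℝ
  have h2 := IsBigO.mul hP hh
  have h3 := (Ex.pow_bdd hs 0).const_mul_left (a1 * b2 + a2 * b1)
  have h4 := (Ex.pow_bdd hs 1).const_mul_left (a2 * b2)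
  simp only [mul_one, one_mul] at h1 h2
  refine (((h1.add h2).add h3).add h4).congr_left ?_
  intro n; ring

lemma Ex.const_mul (hs : Tendsto s atTop (𝓝 0)) (c : ℝ) (hf : Ex s f a0 a1 a2)  :
    Ex s (fun n => c * f n) (c * a0) (c * a1) (c * a2) :=
  ((Ex.const c).mul hs hf).congr (by ring) (by ring) (by ring)

lemma Ex.exp (hs : Tendsto s atTop (𝓝 0)) (hf : Ex s f 0 a1 a2) :
    Ex s (fun n => Real.exp (f n)) 1 a1 (a2 + a1 ^ 2 / 2) := by
  have h1 := (Real.exp_sub_sum_range_isBigO_pow 3).comp_tendsto (hf.tendsto hs)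
  have h2 : f =O[atTop] s := by
    have e1 : (fun n => s n ^ 3) =O[atTop] s := by
      simpa [pow_succ] using ((hs.pow 2).isBigO_one ℝ).mul (isBigO_refl s atTop)
    have e2 : (fun n => (a1 + a2 * s n) * s n) =O[atTop] s := by
      simpa using ((tendsto_const_nhds.add (hs.const_mul a2)).isBigO_one ℝ).mul (isBigO_refl s atTop)
    refine ((IsBigO.trans hf e1).add e2).congr_left ?_
    intro n; ring
  have h3 := h1.trans (h2.pow 3)
  have h4 : Ex s (fun n => 1 + f n + 1 / 2 * (f n * f n)) 1 a1 (a2 + a1 ^ 2 / 2) :=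
    (((Ex.const 1).add hf).add ((hf.mul hs hf).const_mul hs (1 / 2))).congr (by ring) (by ring) (by ring)
  refine h4.add_bigO (h3.congr_left ?_)
  intro n
  simp [Finset.sum_range_succ]
  ring

lemma Ex.rpow (hs : Tendsto s atTop (𝓝 0)) (y p : ℝ) :
    Ex s (fun n => (1 + y * s n) ^ p) 1 (p * y) (p * (p - 1) / 2 * y ^ 2) := by
  have hy : Tendsto (fun n => y * s n) atTop (𝓝 0) := by simpa using hs.const_mul y
  have h1 := (aux_binom p).comp_tendsto hy
  have h2 : (fun n => (y * s n) ^ 4) =O[atTop] fun n => s n ^ 3 := by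
    simpa [mul_pow] using (Ex.pow_bdd hs 1).const_mul_left (y ^ 4)
  have h3 := (Ex.pow_bdd hs 0).const_mul_left (p * (p - 1) * (p - 2) / 6 * y ^ 3)
  refine ((h1.trans h2).add h3).congr_left ?_
  intro n
  simp only [Function.comp]
  ring

lemma Ex.rpow_div (hs : Tendsto s atTop (𝓝 0)) (hs0 : ∀ᶠ n in atTop, s n ≠ 0) (y p : ℝ) :
    Ex s (fun n => ((1 + y * s n) ^ p - 1 - p * y * s n) / s n) 0 (p * (p - 1) / 2 * y ^ 2)
      (p * (p - 1) * (p - 2) / 6 * y ^ 3) := by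
  have hy : Tendsto (fun n => y * s n) atTop (𝓝 0) := by simpa using hs.const_mul y
  have h1 := (aux_binom p).comp_tendsto hy
  have h2 : (fun n => (y * s n) ^ 4) =O[atTop] fun n => s n ^ 4 := by
    simpa [mul_pow] using (isBigO_refl (fun n => s n ^ 4) atTop).const_mul_left (y ^ 4)
  have h4 := (h1.trans h2).mul (isBigO_refl (fun n => (s n)⁻¹) atTop)
  refine h4.congr' ?_ ?_
  · filter_upwards [hs0] with n hn
    simp only [Function.comp]
    field_simp
    ring
  · filter_upwards [hs0] with n hn
    field_simp
end

open MeasureTheory in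
lemma aux_integrable : Integrable (fun u : ℝ => Real.exp (-u ^ 2 / 2)) := by
  have := integrable_exp_neg_mul_sq (b := 1 / 2) (by norm_num)
  refine this.congr (Eventually.of_forall fun u => ?_)
  simp only; congr 1; ring

open MeasureTheory in
lemma aux_total : ∫ u : ℝ, Real.exp (-u ^ 2 / 2) = Real.sqrt (2 * Real.pi) := by
  have := integral_gaussian (1 / 2)
  rw [show Real.pi / (1 / 2) = 2 * Real.pi by ring] at this
  rw [← this]
  congr 1; ext u; congr 1; ring

open MeasureTheory in
lemma aux_tail (x : ℝ) : stdNormalCDF x =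
    1 - (∫ u in Set.Ioi x, Real.exp (-u ^ 2 / 2)) / Real.sqrt (2 * Real.pi) := by
  have h := intervalIntegral.integral_Iic_add_Ioi (b := x) aux_integrable.integrableOn aux_integrable.integrableOn
  rw [aux_total] at h
  have hp : 0 < Real.sqrt (2 * Real.pi) := by positivity
  unfold stdNormalCDF
  rw [integral_div]
  rw [eq_sub_iff_add_eq, ← add_div, div_eq_one_iff_eq hp.ne']
  linarith

open MeasureTheory in
lemma aux_mills (x : ℝ) (hx : 0 < x) :
    |(∫ u in Set.Ioi x, Real.exp (-u ^ 2 / 2)) -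
      Real.exp (-x ^ 2 / 2) * (1 / x) * (1 - 1 / x ^ 2 + 3 / x ^ 4)|
      ≤ 15 / x ^ 6 * (Real.exp (-x ^ 2 / 2) * (1 / x) * (1 - 1 / x ^ 2 + 3 / x ^ 4)) := by
  set F : ℝ → ℝ := fun u => -(Real.exp (-u ^ 2 / 2) * (1 / u) * (1 - 1 / u ^ 2 + 3 / u ^ 4)) with hF
  set F' : ℝ → ℝ := fun u => Real.exp (-u ^ 2 / 2) * (1 + 15 / u ^ 6) with hF'
  have hd : ∀ u ∈ Set.Ici x, HasDerivAt F (F' u) u := by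
    intro u hu
    have hu0 : 0 < u := lt_of_lt_of_le hx hu
    have hu1 : u ≠ 0 := hu0.ne'
    have e1 : HasDerivAt (fun u : ℝ => Real.exp (-u ^ 2 / 2)) (Real.exp (-u ^ 2 / 2) * (-u)) u := by
      refine HasDerivAt.exp ?_
      have := ((hasDerivAt_pow 2 u).neg).div_const 2
      refine this.congr_deriv ?_
      simp; ring
    have e2 : HasDerivAt (fun u : ℝ => u⁻¹) (-(u ^ 2)⁻¹) u := hasDerivAt_inv hu1
    have e3 := (e1.mul ((e2.sub (e2.pow 3)).add ((e2.pow 5).const_mul 3))).neg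
    refine (e3.congr_of_eventuallyEq ?_).congr_deriv ?_
    · filter_upwards [eventually_ne_nhds hu1] with v hv
      simp [hF]
      field_simp
    · simp [hF']
      field_simp
      ring
  have hpos : ∀ u ∈ Set.Ioi x, 0 ≤ F' u := by
    intro u hu
    have hu0 : 0 < u := lt_trans hx hu
    simp only [hF']; positivity
  have hl : Tendsto F atTop (𝓝 0) := by
    have i1 : Tendsto (fun u : ℝ => u⁻¹) atTop (𝓝 0) := tendsto_inv_atTop_zero
    have i2 : Tendsto (fun u : ℝ => u⁻¹ * (1 - u⁻¹ ^ 2 + 3 * u⁻¹ ^ 4)) atTop (𝓝 (0 * (1 - 0 ^ 2 + 3 * 0 ^ 4))) :=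
      i1.mul ((tendsto_const_nhds.sub (i1.pow 2)).add ((i1.pow 4).const_mul 3))
    rw [show (0 : ℝ) * (1 - 0 ^ 2 + 3 * 0 ^ 4) = 0 by ring] at i2
    have i3 := i2.zero_mul_isBoundedUnder_le (g := fun u : ℝ => -Real.exp (-u ^ 2 / 2))
      (isBoundedUnder_of ⟨1, fun u => by
        simp only [Function.comp, norm_neg, Real.norm_eq_abs, Real.abs_exp, Real.exp_le_one_iff]
        have := sq_nonneg u
        linarith⟩)
    refine i3.congr fun u => ?_
    simp only [hF, one_div, div_eq_mul_inv, inv_pow]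
    ring
  have hFint := integrableOn_Ioi_deriv_of_nonneg' hd hpos hl
  have hval := integral_Ioi_of_hasDerivAt_of_nonneg' hd hpos hl
  have hI := aux_integrable.integrableOn (s := Set.Ioi x)
  have l1 : (∫ u in Set.Ioi x, Real.exp (-u ^ 2 / 2)) ≤ ∫ u in Set.Ioi x, F' u := by
    refine setIntegral_mono_on hI hFint measurableSet_Ioi ?_
    intro u hu
    have hu0 : 0 < u := lt_trans hx hu
    have : 0 ≤ Real.exp (-u ^ 2 / 2) * (15 / u ^ 6) := by positivity
    simp only [hF']; linarith
  have l2 : (∫ u in Set.Ioi x, F' u) ≤ ∫ u in Set.Ioi x, (1 + 15 / x ^ 6) * Real.exp (-u ^ 2 / 2) := by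
    refine setIntegral_mono_on hFint (hI.const_mul _) measurableSet_Ioi ?_
    intro u hu
    have hu0 : 0 < u := lt_trans hx hu
    have hu1 : x < u := hu
    have : 15 / u ^ 6 ≤ 15 / x ^ 6 := by gcongr
    simp only [hF']
    rw [mul_comm]
    gcongr
  rw [integral_const_mul] at l2
  rw [hval] at l1 l2
  simp only [hF, zero_sub, neg_neg] at l1 l2
  set P := Real.exp (-x ^ 2 / 2) * (1 / x) * (1 - 1 / x ^ 2 + 3 / x ^ 4)
  set I := ∫ u in Set.Ioi x, Real.exp (-u ^ 2 / 2)
  have hx6 : 0 < 15 / x ^ 6 := by positivity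
  rw [abs_le]
  have : 15 / x ^ 6 * I ≤ 15 / x ^ 6 * P := by gcongr
  have I0 : 0 ≤ I := setIntegral_nonneg measurableSet_Ioi (fun u _ => (Real.exp_pos _).le)
  have : 0 ≤ 15 / x ^ 6 * P := by have : 0 ≤ P := I0.trans l1
                                  positivity
  constructor <;> nlinarith

lemma aux_b_tendsto (b : ℕ → ℝ)
    (hb : ∀ n : ℕ, 1 ≤ n → 0 < b n ∧
      2 * Real.pi * (b n) ^ 2 * Real.exp ((b n) ^ 2) = (n : ℝ) ^ 2) : Tendsto b atTop atTop := by
  rw [tendsto_atTop]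
  intro K
  have h1 : Tendsto (fun n : ℕ => (n : ℝ) ^ 2) atTop atTop :=
    (tendsto_pow_atTop (by norm_num)).comp tendsto_natCast_atTop_atTop
  filter_upwards [h1.eventually_gt_atTop (2 * Real.pi * K ^ 2 * Real.exp (K ^ 2)), eventually_ge_atTop 1] with n hn hn1
  obtain ⟨hp, he⟩ := hb n hn1
  by_contra hlt
  push Not at hlt
  have : 2 * Real.pi * (b n) ^ 2 * Real.exp ((b n) ^ 2) ≤ 2 * Real.pi * K ^ 2 * Real.exp (K ^ 2) := by
    gcongr
  linarith

lemma aux_n (β : ℝ) (n : ℕ) (hn : 1 ≤ n) (hp : 0 < β)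
    (he : 2 * Real.pi * β ^ 2 * Real.exp (β ^ 2) = (n : ℝ) ^ 2) :
    (n : ℝ) = Real.sqrt (2 * Real.pi) * β * Real.exp (β ^ 2 / 2) ∧ 1 / (n : ℝ) ≤ 11 * (1 / β ^ 2) ^ 3 := by
  have hn0 : (0 : ℝ) < n := by exact_mod_cast hn
  constructor
  · rw [← Real.sqrt_sq hn0.le, ← he]
    rw [Real.sqrt_eq_iff_mul_self_eq (by positivity) (by positivity)]
    have h1 : Real.sqrt (2 * Real.pi) ^ 2 = 2 * Real.pi := Real.sq_sqrt (by positivity)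
    have h2 : Real.exp (β ^ 2 / 2) ^ 2 = Real.exp (β ^ 2) := by
      rw [← Real.exp_nat_mul]; congr 1; push_cast; ring
    linear_combination -β ^ 2 * Real.exp (β ^ 2 / 2) ^ 2 * h1 - 2 * Real.pi * β ^ 2 * h2
  · have h1 := Real.pow_div_factorial_le_exp (β ^ 2) (by positivity) 5
    have h2 : (β ^ 6) ^ 2 ≤ (11 * (n : ℝ)) ^ 2 := by
      have h3 := Real.pi_gt_three
      norm_num [Nat.factorial] at h1
      have : 2 * 3 * β ^ 2 * ((β ^ 2) ^ 5 / 120) ≤ (n : ℝ) ^ 2 := by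
        rw [← he]; gcongr
      nlinarith
    have h3 : β ^ 6 ≤ 11 * n := (sq_le_sq₀ (by positivity) (by positivity)).1 h2
    rw [show 11 * (1 / β ^ 2) ^ 3 = 11 / β ^ 6 by field_simp]
    rw [div_le_div_iff₀ hn0 (by positivity)]
    linarith

open Asymptotics in
lemma aux_nq (b : ℕ → ℝ)
    (hb : ∀ n : ℕ, 1 ≤ n → 0 < b n ∧
      2 * Real.pi * (b n) ^ 2 * Real.exp ((b n) ^ 2) = (n : ℝ) ^ 2)
    (t : ℝ) (ht : 0 < t) (x : ℝ) (s g : ℕ → ℝ) (hsdef : ∀ n, s n = 1 / b n ^ 2)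
    (hs : Tendsto s atTop (𝓝 0))
    (hg : ∀ᶠ n in atTop, 0 < 1 + t * x * s n ∧ g n = b n * (1 + t * x * s n) ^ (1 / t)) :
    Ex s (fun n => (n : ℝ) * (1 - stdNormalCDF (g n))) (Real.exp (-x))
      (-(Real.exp (-x) * (1 + x + (2 - t) / 2 * x ^ 2)))
      (Real.exp (-x) * (3 + 3 * x + 3 / 2 * x ^ 2 + (2 - t) * (2 * t + 1) / 6 * x ^ 3 +
                (t - 2) ^ 2 / 8 * x ^ 4)) := by
  have hs0 : ∀ᶠ n in atTop, s n ≠ 0 := by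
    filter_upwards [eventually_ge_atTop 1] with n hn
    have := (hb n hn).1
    rw [hsdef]; positivity
  have hB := Ex.rpow hs (t * x) (-(1 / t))
  have hR := Ex.rpow hs (t * x) (-(2 / t))
  have hE := ((Ex.rpow_div hs hs0 (t * x) (2 / t)).const_mul hs (-(1 / 2))).congr (b0 := 0)
    (mul_zero _) rfl rfl
  have hE2 := hE.exp hs
  have hsR := Ex.self.mul hs hR
  have hM := ((Ex.const 1).add (hsR.const_mul hs (-1))).add ((hsR.mul hs hsR).const_mul hs 3)
  have hQ := (((hE2.const_mul hs (Real.exp (-x))).mul hs hB).mul hs hM)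
  have hQ2 := hQ.congr (b0 := Real.exp (-x))
    (b1 := -(Real.exp (-x) * (1 + x + (2 - t) / 2 * x ^ 2)))
    (b2 := Real.exp (-x) * (3 + 3 * x + 3 / 2 * x ^ 2 + (2 - t) * (2 * t + 1) / 6 * x ^ 3 +
                (t - 2) ^ 2 / 8 * x ^ 4)) (by ring) (by field_simp; ring) (by field_simp; ring)
  refine hQ2.add_bigO ?_
  have hbd := ((isBigO_refl (fun n => s n ^ 3) atTop).mul
    (((hR.bdd hs).pow 3).mul (hQ.bdd hs))).const_mul_left 15
  simp only [one_pow, mul_one] at hbd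
  refine IsBigO.trans (IsBigO.of_bound 1 ?_) hbd
  filter_upwards [hg, eventually_ge_atTop 1] with n hgn hn
  obtain ⟨hw, hgn⟩ := hgn
  obtain ⟨hbp, hbe⟩ := hb n hn
  obtain ⟨hn1, -⟩ := aux_n (b n) n hn hbp hbe
  have hsn := hsdef n
  set β := b n
  set σ := s n
  set w := 1 + t * x * σ with hwdef
  set γ := g n
  have hγ : 0 < γ := by rw [hgn]; positivity
  have hσ : 0 < σ := by rw [hsn]; positivity
  have eB : w ^ (-(1 / t)) = β / γ := by
    rw [hgn, Real.rpow_neg hw.le]; field_simp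
  have e2 : w ^ (2 / t) = γ ^ 2 / β ^ 2 := by
    rw [hgn, show 2 / t = (1 / t) * (2 : ℕ) by push_cast; ring, Real.rpow_mul_natCast hw.le]
    field_simp
  have eR : σ * w ^ (-(2 / t)) = 1 / γ ^ 2 := by
    rw [Real.rpow_neg hw.le, e2, hsn]; field_simp
  have eE : Real.exp (-x) * Real.exp (-(1 / 2) * ((w ^ (2 / t) - 1 - 2 / t * (t * x) * σ) / σ))
      = Real.exp (β ^ 2 / 2) * Real.exp (-γ ^ 2 / 2) := by
    rw [← Real.exp_add, ← Real.exp_add, e2, hsn]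
    congr 1
    field_simp
    ring
  have key := aux_mills γ hγ
  have hp : 0 < Real.sqrt (2 * Real.pi) := by positivity
  have e3 : (n : ℝ) * (1 - stdNormalCDF γ) =
      β * Real.exp (β ^ 2 / 2) * ∫ u in Set.Ioi γ, Real.exp (-u ^ 2 / 2) := by
    rw [aux_tail, hn1]; field_simp; ring
  have eM : (1 + -1 * (σ * w ^ (-(2 / t))) + 3 * (σ * w ^ (-(2 / t)) * (σ * w ^ (-(2 / t)))))
      = 1 - 1 / γ ^ 2 + 3 / γ ^ 4 := by
    rw [eR]; field_simp
    ring
  rw [e3, eM, eE, eB]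
  have e4 : 15 * (σ ^ 3 * ((w ^ (-(2 / t))) ^ 3 * (Real.exp (β ^ 2 / 2) * Real.exp (-γ ^ 2 / 2)
      * (β / γ) * (1 - 1 / γ ^ 2 + 3 / γ ^ 4)))) = β * Real.exp (β ^ 2 / 2) *
      (15 / γ ^ 6 * (Real.exp (-γ ^ 2 / 2) * (1 / γ) * (1 - 1 / γ ^ 2 + 3 / γ ^ 4))) := by
    have : σ ^ 3 * (w ^ (-(2 / t))) ^ 3 = 1 / γ ^ 6 := by
      rw [← mul_pow, eR]; field_simp
    rw [← mul_assoc (σ ^ 3), this]; ring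
  rw [e4, one_mul, Real.norm_eq_abs, Real.norm_eq_abs]
  refine le_trans ?_ (le_abs_self _)
  have hc : 0 < β * Real.exp (β ^ 2 / 2) := by positivity
  have := mul_le_mul_of_nonneg_left key hc.le
  refine le_trans (le_of_eq ?_) this
  rw [← abs_of_pos hc, ← abs_mul, abs_of_pos hc]
  congr 1
  ring

open Asymptotics in
lemma aux_main (s q : ℕ → ℝ) (A a1 a2 : ℝ) (hs : Tendsto s atTop (𝓝 0))
    (hn : (fun n : ℕ => 1 / (n : ℝ)) =O[atTop] fun n => s n ^ 3)
    (h : Ex s (fun n => (n : ℝ) * q n) A (-a1) a2) :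
    Ex s (fun n => (1 - q n) ^ (n - 1)) (Real.exp (-A)) (Real.exp (-A) * a1)
      (Real.exp (-A) * (a1 ^ 2 / 2 - a2)) := by
  have hq : q =O[atTop] fun n => s n ^ 3 := by
    have h1 := (h.bdd hs).mul hn
    refine h1.congr' ?_ (by simp)
    filter_upwards [eventually_ge_atTop 1] with n hn
    have : (0 : ℝ) < n := by exact_mod_cast hn
    field_simp
  have hq0 : Tendsto q atTop (𝓝 0) := hq.trans_tendsto (by simpa using hs.pow 3)
  have hsm : ∀ᶠ n in atTop, |q n| < 1 / 2 := by
    have := hq0.abs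
    rw [abs_zero] at this
    exact this.eventually_lt_const (by norm_num)
  have hL : Ex s (fun n => A + ((n - 1 : ℕ) : ℝ) * Real.log (1 - q n)) 0 a1 (-a2) := by
    have e1 : Ex s (fun n => A + -1 * ((n : ℝ) * q n)) 0 a1 (-a2) :=
      ((Ex.const A).add (h.const_mul hs (-1))).congr (by ring) (by ring) (by ring)
    refine e1.add_bigO ?_
    have e2 : (fun n => 2 * ((n * q n) * q n)) =O[atTop] fun n => s n ^ 3 := by
      simpa using ((h.bdd hs).mul hq).const_mul_left 2
    have e3 : (fun n => ((n - 1 : ℕ) : ℝ) * (q n + Real.log (1 - q n))) =O[atTop] fun n => s n ^ 3 := by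
      refine IsBigO.trans (IsBigO.of_bound 1 ?_) e2
      filter_upwards [hsm] with n hn
      have := Real.abs_log_sub_add_sum_range_le (x := q n) (by linarith) 1
      simp at this
      have h3 : |q n| ^ 2 / (1 - |q n|) ≤ 2 * |q n| ^ 2 := by
        rw [div_le_iff₀ (by linarith)]
        nlinarith [sq_nonneg |q n|]
      simp only [Real.norm_eq_abs, abs_mul, one_mul, Nat.abs_cast, Nat.abs_ofNat]
      have h4 : ((n - 1 : ℕ) : ℝ) ≤ n := by exact_mod_cast Nat.sub_le n 1
      have h5 : |q n + Real.log (1 - q n)| ≤ 2 * |q n| ^ 2 := by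
        refine le_trans ?_ h3
        simpa using this
      calc _ ≤ (n : ℝ) * (2 * |q n| ^ 2) := by gcongr
        _ = _ := by ring
    refine (e3.add hq).congr' ?_ EventuallyEq.rfl
    filter_upwards [eventually_ge_atTop 1] with n hn
    push_cast [hn]
    ring
  have := ((hL.exp hs).const_mul hs (Real.exp (-A))).congr (b0 := Real.exp (-A))
    (b1 := Real.exp (-A) * a1) (b2 := Real.exp (-A) * (a1 ^ 2 / 2 - a2)) (by ring) (by ring) (by ring)
  refine this.congr_fun ?_
  filter_upwards [hsm] with n hn
  have : 0 < 1 - q n := by have := (abs_lt.1 hn).2; linarith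
  rw [← Real.exp_add, neg_add_cancel_left, ← Real.log_pow, Real.exp_log (by positivity)]

/-- With `b_n` the unique positive solution of `2π b_n² exp(b_n²) = n²`,
`c_n = t b_n^{t−2}`, `d_n = b_n^t` (for `t > 0`, `t ≠ 2`) and `g_n = (c_n x + d_n)^{1/t}`:
`Φ(g_n)^{n−1} = Λ(x)(1 + ϑ₁ e^{−x} b_n^{−2} + e^{−x} b_n^{−4}((ϑ₁²/2)e^{−x} − ϑ₂) + O(b_n^{−6}))`,
where `ϑ₁ = 1 + x + ((2−t)/2)x²` and
`ϑ₂ = 3 + 3x + (3/2)x² + ((2−t)(2t+1)/6)x³ + ((t−2)²/8)x⁴`. -/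
theorem powered_extremes_cdf_power_expansion
    (b : ℕ → ℝ)
    (hb : ∀ n : ℕ, 1 ≤ n → 0 < b n ∧
      2 * Real.pi * (b n) ^ 2 * Real.exp ((b n) ^ 2) = (n : ℝ) ^ 2)
    (t : ℝ) (ht : 0 < t) (ht2 : t ≠ 2) (x : ℝ)
    (c d g : ℕ → ℝ)
    (hc : ∀ n : ℕ, c n = t * b n ^ (t - 2))
    (hd : ∀ n : ℕ, d n = b n ^ t)
    (hg : ∀ n : ℕ, g n = (c n * x + d n) ^ (1 / t)) :
    ∃ C > (0 : ℝ), ∃ N : ℕ, ∀ n : ℕ, N ≤ n →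
      0 < c n * x + d n ∧
      |stdNormalCDF (g n) ^ (n - 1) -
        gumbel x * (1 + (1 + x + (2 - t) / 2 * x ^ 2) * Real.exp (-x) / (b n) ^ 2 +
          Real.exp (-x) / (b n) ^ 4 *
            ((1 + x + (2 - t) / 2 * x ^ 2) ^ 2 / 2 * Real.exp (-x) -
              (3 + 3 * x + 3 / 2 * x ^ 2 + (2 - t) * (2 * t + 1) / 6 * x ^ 3 +
                (t - 2) ^ 2 / 8 * x ^ 4)))|
      ≤ C / (b n) ^ 6 := by
  
  have hbt := aux_b_tendsto b hb
  set s : ℕ → ℝ := fun n => 1 / b n ^ 2 with hsdef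
  have hs : Tendsto s atTop (𝓝 0) := by
    have := (tendsto_inv_atTop_zero.comp hbt).pow 2
    simpa [hsdef, Function.comp_def] using this
  have hw : ∀ᶠ n in atTop, 0 < 1 + t * x * s n := by
    have h1 : Tendsto (fun n => 1 + t * x * s n) atTop (𝓝 (1 + t * x * 0)) :=
      tendsto_const_nhds.add (hs.const_mul _)
    exact h1.eventually_const_lt (by norm_num)
  have hcd : ∀ n, 1 ≤ n → c n * x + d n = b n ^ t * (1 + t * x * s n) := by
    intro n hn
    have hp := (hb n hn).1
    rw [hc, hd, Real.rpow_sub hp, Real.rpow_two]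
    simp only [hsdef]
    ring
  have hg' : ∀ᶠ n in atTop, 0 < 1 + t * x * s n ∧ g n = b n * (1 + t * x * s n) ^ (1 / t) := by
    filter_upwards [hw, eventually_ge_atTop 1] with n hwn hn
    have hp := (hb n hn).1
    refine ⟨hwn, ?_⟩
    rw [hg, hcd n hn, Real.mul_rpow (by positivity) hwn.le, ← Real.rpow_mul hp.le,
      mul_one_div_cancel ht.ne', Real.rpow_one]
  have h1n : (fun n : ℕ => 1 / (n : ℝ)) =O[atTop] fun n => s n ^ 3 := by
    refine Asymptotics.IsBigO.of_bound 11 ?_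
    filter_upwards [eventually_ge_atTop 1] with n hn
    obtain ⟨hp, he⟩ := hb n hn
    have := (aux_n (b n) n hn hp he).2
    rw [Real.norm_of_nonneg (by positivity), Real.norm_of_nonneg (by positivity)]
    exact this
  have hE := aux_main s _ _ _ _ hs h1n (aux_nq b hb t ht x s g (fun _ => rfl) hs hg')
  obtain ⟨C, hC, hCb⟩ := Asymptotics.IsBigO.exists_pos hE
  rw [Asymptotics.isBigOWith_iff] at hCb
  obtain ⟨N, hN⟩ := eventually_atTop.1 ((hCb.and hw).and (eventually_ge_atTop 1))
  refine ⟨C, hC, N, fun n hn => ?_⟩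
  obtain ⟨⟨h1, h2⟩, h3⟩ := hN n hn
  have hp := (hb n h3).1
  refine ⟨by rw [hcd n h3]; positivity, ?_⟩
  rw [Real.norm_eq_abs, Real.norm_of_nonneg (by positivity)] at h1
  simp only [sub_sub_cancel] at h1
  have e1 : C * s n ^ 3 = C / b n ^ 6 := by simp only [hsdef]; field_simp
  rw [e1] at h1
  refine le_trans (le_of_eq ?_) h1
  congr 2
  simp only [gumbel, hsdef]
  field_simp
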